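/- Let s ≥ 0 and p ∈ (1,2), and set p' = p/(2−p). There exists a constant C > 0, depending only on s and p, such that for every R ≥ 1, every 0 < r ≤ 1, and every U₀ ∈ L²(ℝ³) ∩ L²_hL^p_v(ℝ³), one has ∫_{{|ξ₃| < r, |ξ_h| < R}} (1 + |ξ|²)^s |Û₀(ξ)|² dξ ≤ C R^{2s} r^{1/p'} ‖U₀‖²_{L²_hL^p_v}. -/

import Mathlib

/- Common setup: the space ℝ³ (as a Euclidean space), Fourier transform,
   partial derivatives, Sobolev-type norms. -/

noncomputable section

open MeasureTheory Real Complex Filter ENNReal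

/-- The space `ℝ³`. -/
abbrev E3 : Type := EuclideanSpace ℝ (Fin 3)

/-- Fourier transform on `ℝ³`. -/
def FT (f : E3 → ℂ) : E3 → ℂ := FourierTransform.fourier f

/-- Inverse Fourier transform on `ℝ³`. -/
def FTinv (f : E3 → ℂ) : E3 → ℂ := FourierTransformInv.fourierInv f

/-- The point `(x₁, x₂, x₃) ∈ ℝ³`. -/
def pt (x1 x2 x3 : ℝ) : E3 := (EuclideanSpace.equiv (Fin 3) ℝ).symm ![x1, x2, x3]

/-- Fourier transform of a real-valued function. -/
def FTr (f : E3 → ℝ) : E3 → ℂ := FT (fun x => (f x : ℂ))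

/-- Partial derivative `∂ᵢ` of a real-valued function. -/
def pd (i : Fin 3) (f : E3 → ℝ) (x : E3) : ℝ := fderiv ℝ f x (EuclideanSpace.single i 1)

/-- Partial derivative `∂ᵢ` of a complex-valued function. -/
def pdC (i : Fin 3) (f : E3 → ℂ) (x : E3) : ℂ := fderiv ℝ f x (EuclideanSpace.single i 1)

/-- The `H^s` norm `(∫ (1+|ξ|²)^s |û(ξ)|² dξ)^{1/2}` of a complex-valued function. -/
def hsNormC (s : ℝ) (f : E3 → ℂ) : ℝ :=
  (∫ ξ : E3, (1 + ‖ξ‖ ^ 2) ^ s * ‖FT f ξ‖ ^ 2) ^ (1/2 : ℝ)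

/-- Membership in `H^s(ℝ³)` (finiteness of the `H^s` norm). -/
def MemHsC (s : ℝ) (f : E3 → ℂ) : Prop :=
  Measurable f ∧ Integrable (fun ξ : E3 => (1 + ‖ξ‖ ^ 2) ^ s * ‖FT f ξ‖ ^ 2)

/-- `H^s` norm of a real-valued function. -/
def hsNormR (s : ℝ) (f : E3 → ℝ) : ℝ := hsNormC s (fun x => (f x : ℂ))

/-- Membership in `H^s(ℝ³)` for a real-valued function. -/
def MemHsR (s : ℝ) (f : E3 → ℝ) : Prop := MemHsC s (fun x => (f x : ℂ))

/-- `H^s` norm of an `ℝ⁴`-valued function. -/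
def hsNorm4 (s : ℝ) (U : E3 → Fin 4 → ℝ) : ℝ :=
  (∑ m : Fin 4, hsNormR s (fun x => U x m) ^ 2) ^ (1/2 : ℝ)

/-- Membership in `H^s(ℝ³)⁴`. -/
def MemHs4 (s : ℝ) (U : E3 → Fin 4 → ℝ) : Prop := ∀ m : Fin 4, MemHsR s (fun x => U x m)

/-- A smooth cut-off function `ψ` with values in `[0,1]`, equal to `1` on `(-∞,1]`
and to `0` on `[2,∞)`. -/
def IsCutoff (ψ : ℝ → ℝ) : Prop :=
  ContDiff ℝ (⊤ : ℕ∞) ψ ∧ (∀ x, ψ x ∈ Set.Icc (0:ℝ) 1) ∧ (∀ x ≤ (1:ℝ), ψ x = 1) ∧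
    (∀ x, (2:ℝ) ≤ x → ψ x = 0)

/-- The norm `|ξ_h|` of the horizontal component of a frequency `ξ`. -/
def xih (ξ : E3) : ℝ := Real.sqrt (ξ 0 ^ 2 + ξ 1 ^ 2)

/-- The frequency cut-off function `Ψ_{r,R}`. -/
def Psi (ψ : ℝ → ℝ) (r R : ℝ) (ξ : E3) : ℝ :=
  ψ (‖ξ‖ / R) * ((1 - ψ (xih ξ / r)) * (1 - ψ (|ξ 2| / r)))

/-- The set `C_{r,R} = {ξ : |ξ| ≤ R, |ξ_h| ≥ r, |ξ₃| ≥ r}`. -/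
def CrR (r R : ℝ) : Set E3 := {ξ | ‖ξ‖ ≤ R ∧ r ≤ xih ξ ∧ r ≤ |ξ 2|}

/-- The frequency cut-off operator `Ψ_{r,R}(D) g = 𝓕⁻¹(Ψ_{r,R} ĝ)`. -/
def PsiD (ψ : ℝ → ℝ) (r R : ℝ) (g : E3 → ℂ) : E3 → ℂ :=
  FTinv (fun ξ => (Psi ψ r R ξ : ℂ) * FT g ξ)

/-- Anisotropic norm `‖f‖_{L²_h L^p_v}`. -/
def L2hLpvNorm (p : ℝ) (f : E3 → ℝ) : ℝ :=
  (∫ xh : ℝ × ℝ, (∫ x3 : ℝ, |f (pt xh.1 xh.2 x3)| ^ p) ^ (2/p)) ^ (1/2 : ℝ)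

/-- Anisotropic norm `‖f‖_{L^p_h L²_v}`. -/
def LphL2vNorm (p : ℝ) (f : E3 → ℝ) : ℝ :=
  (∫ xh : ℝ × ℝ, (∫ x3 : ℝ, (f (pt xh.1 xh.2 x3)) ^ 2) ^ (p/2)) ^ (1/p)

/-- Membership in `L²_h L^p_v(ℝ³)`. -/
def MemL2hLpv (p : ℝ) (f : E3 → ℝ) : Prop :=
  Integrable (fun xh : ℝ × ℝ => (∫ x3 : ℝ, |f (pt xh.1 xh.2 x3)| ^ p) ^ (2/p))

/-- Membership in `L^p_h L²_v(ℝ³)`. -/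
def MemLphL2v (p : ℝ) (f : E3 → ℝ) : Prop :=
  Integrable (fun xh : ℝ × ℝ => (∫ x3 : ℝ, (f (pt xh.1 xh.2 x3)) ^ 2) ^ (p/2))

/-- The norm of the space `Y_{s,s₀,p}`. -/
def Ynorm (s s0 p : ℝ) (U : E3 → Fin 4 → ℝ) : ℝ :=
  max (hsNorm4 (s + s0) U)
    (max ((∑ m : Fin 4, L2hLpvNorm p (fun x => U x m) ^ 2) ^ (1/2 : ℝ))
         ((∑ m : Fin 4, LphL2vNorm p (fun x => U x m) ^ 2) ^ (1/2 : ℝ)))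

/-- Membership in `Y_{s,s₀,p} = H^{s+s₀}(ℝ³)⁴ ∩ L²_hL^p_v(ℝ³)⁴ ∩ L^p_hL²_v(ℝ³)⁴`. -/
def MemY (s s0 p : ℝ) (U : E3 → Fin 4 → ℝ) : Prop :=
  ∀ m : Fin 4, MemHsR (s + s0) (fun x => U x m) ∧ MemL2hLpv p (fun x => U x m) ∧
    MemLphL2v p (fun x => U x m)

/-- `𝒞(U₀) = max{‖U₀‖_Y, ‖U₀‖_Y²}`. -/
def CC (s s0 p : ℝ) (U : E3 → Fin 4 → ℝ) : ℝ :=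
  max (Ynorm s s0 p U) (Ynorm s s0 p U ^ 2)


/-- anisotropic Gaussian weight -/
def gw (a : Fin 3 → ℝ) (ξ : E3) : ℝ := Real.exp (-∑ i, (π / a i ^ 2) * ξ i ^ 2)

/-- its Fourier transform -/
def gk (a : Fin 3 → ℝ) (z : E3) : ℝ := ∏ i, (a i * Real.exp (-π * a i ^ 2 * z i ^ 2))

lemma gw_cont (a : Fin 3 → ℝ) : Continuous (gw a) := by
  unfold gw; fun_prop

lemma gw_integrable (a : Fin 3 → ℝ) (ha : ∀ i, 0 < a i) : Integrable (gw a) := by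
  have h := GaussianFourier.integrable_cexp_neg_sum_mul_add (ι := Fin 3)
    (b := fun i => ((π / a i ^ 2 : ℝ) : ℂ))
    (fun i => by rw [Complex.ofReal_re]; have := ha i; positivity) (fun _ => 0)
  rw [← (PiLp.volume_preserving_toLp (Fin 3)).integrable_comp_emb
    (MeasurableEquiv.toLp 2 _).measurableEmbedding]
  refine h.norm.congr (Eventually.of_forall fun v => ?_)
  simp only [Complex.norm_exp, gw, Function.comp]
  congr 1
  have : (-∑ i, ((π / a i ^ 2 : ℝ) : ℂ) * (v i : ℂ) ^ 2 + ∑ i, (0:ℂ) * v i)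
    = ((-∑ i, (π / a i ^ 2) * v i ^ 2 : ℝ) : ℂ) := by push_cast; simp
  rw [this, Complex.ofReal_re]

lemma gw_fourier (a : Fin 3 → ℝ) (ha : ∀ i, 0 < a i) (z : E3) :
    ∫ ξ : E3, cexp ((-2 * π * inner ℝ z ξ : ℝ) * I) * (gw a ξ : ℂ) = (gk a z : ℂ) := by
  have h := GaussianFourier.integral_cexp_neg_sum_mul_add (ι := Fin 3)
    (b := fun i => ((π / a i ^ 2 : ℝ) : ℂ))
    (fun i => by rw [Complex.ofReal_re]; have := ha i; positivity)
    (fun i => (-2 * π * z i : ℝ) * I)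
  rw [← (PiLp.volume_preserving_toLp (Fin 3)).integral_comp
    (MeasurableEquiv.toLp 2 _).measurableEmbedding]
  have e1 : ∀ v : Fin 3 → ℝ,
      cexp ((-2 * π * inner ℝ z (WithLp.toLp 2 v) : ℝ) * I) * (gw a (WithLp.toLp 2 v) : ℂ)
      = cexp (-∑ i, ((π / a i ^ 2 : ℝ) : ℂ) * (v i : ℂ) ^ 2
          + ∑ i, ((-2 * π * z i : ℝ) * I) * v i) := by
    intro v
    rw [gw, Complex.ofReal_exp, ← Complex.exp_add]
    congr 1
    simp only [PiLp.inner_apply, Fin.sum_univ_three, RCLike.inner_apply, conj_trivial]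
    push_cast
    ring
  simp_rw [e1]
  rw [h, gk, Complex.ofReal_prod]
  refine Finset.prod_congr rfl fun i _ => ?_
  have hai := ha i
  have hpi := Real.pi_pos
  have e2 : ((π : ℂ) / ((π / a i ^ 2 : ℝ) : ℂ)) = ((a i ^ 2 : ℝ) : ℂ) := by
    rw [← Complex.ofReal_div]; congr 1; field_simp
  have e3 : (((-2 * π * z i : ℝ) : ℂ) * I) ^ 2 / (4 * ((π / a i ^ 2 : ℝ) : ℂ))
      = ((-π * a i ^ 2 * z i ^ 2 : ℝ) : ℂ) := by
    rw [mul_pow, Complex.I_sq]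
    have : (a i : ℂ) ≠ 0 := by exact_mod_cast hai.ne'
    have : (π : ℂ) ≠ 0 := by exact_mod_cast hpi.ne'
    push_cast; field_simp
    ring
  rw [e2, e3]
  have e4 : ((a i ^ 2 : ℝ) : ℂ) ^ (1 / 2 : ℂ) = (a i : ℂ) := by
    have : (1 / 2 : ℂ) = ((1 / 2 : ℝ) : ℂ) := by push_cast; rfl
    rw [this, ← Complex.ofReal_cpow (by positivity), ← Real.sqrt_eq_rpow,
      Real.sqrt_sq hai.le]
  rw [e4]; push_cast; rfl

lemma FTr_eq (U : E3 → ℝ) (ξ : E3) :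
    FTr U ξ = ∫ x : E3, cexp ((-2 * π * inner ℝ x ξ : ℝ) * I) * (U x : ℂ) := by
  rw [FTr, FT, Real.fourier_eq']
  simp only [smul_eq_mul]

lemma FTr_bound (U : E3 → ℝ) (ξ : E3) : ‖FTr U ξ‖ ≤ ∫ x, ‖U x‖ := by
  rw [FTr_eq]
  refine (norm_integral_le_integral_norm _).trans (le_of_eq ?_)
  congr 1; ext x
  rw [norm_mul, Complex.norm_exp_ofReal_mul_I, one_mul, Complex.norm_real]

lemma FTr_cont (U : E3 → ℝ) (hU : Integrable U) : Continuous (FTr U) := by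
  have := VectorFourier.fourierIntegral_continuous (L := innerₗ E3) (e := Real.fourierChar)
    (μ := volume) Real.continuous_fourierChar (by exact continuous_inner) hU.ofReal (𝕜 := ℝ) (E := ℂ)
  exact this

lemma gw_FTr_integrable (a : Fin 3 → ℝ) (ha : ∀ i, 0 < a i) (U : E3 → ℝ) (hU : Integrable U) :
    Integrable (fun ξ => gw a ξ * ‖FTr U ξ‖ ^ 2) := by
  refine (gw_integrable a ha).mul_bdd (c := (∫ x, ‖U x‖) ^ 2) ?_ ?_
  · exact ((FTr_cont U hU).norm.pow 2).aestronglyMeasurable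
  · refine Eventually.of_forall fun ξ => ?_
    rw [Real.norm_eq_abs, abs_of_nonneg (by positivity)]
    gcongr
    exact FTr_bound U ξ

lemma my_enorm (x : ℝ) : ‖(x : ℂ)‖ₑ = ‖x‖ₑ := by
  rw [← ofReal_norm, ← ofReal_norm, Complex.norm_real]

lemma weighted_le (a : Fin 3 → ℝ) (ha : ∀ i, 0 < a i) (U : E3 → ℝ) (hU : Integrable U) :
    ENNReal.ofReal (∫ ξ, gw a ξ * ‖FTr U ξ‖ ^ 2) ≤
      ∫⁻ q : E3 × E3, ‖U q.1‖ₑ * ‖U q.2‖ₑ * ENNReal.ofReal (gk a (q.1 - q.2)) := by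
  have hgk : ∀ z, 0 ≤ gk a z := fun z => Finset.prod_nonneg fun i _ => by
    have := ha i; positivity
  set F : E3 → E3 × E3 → ℂ := fun ξ q =>
    cexp ((-2 * π * inner ℝ (q.1 - q.2) ξ : ℝ) * I) * ((gw a ξ : ℂ) * ((U q.1 : ℂ) * (U q.2 : ℂ)))
    with hF
  have hFint : Integrable (Function.uncurry F) ((volume : Measure E3).prod volume) := by
    have h1 : Integrable (fun t : E3 × (E3 × E3) => (gw a t.1 : ℂ) *
        ((U t.2.1 : ℂ) * (U t.2.2 : ℂ))) ((volume : Measure E3).prod volume) :=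
      ((gw_integrable a ha).ofReal (𝕜 := ℂ)).mul_prod
        ((hU.ofReal (𝕜 := ℂ)).mul_prod (hU.ofReal (𝕜 := ℂ)))
    refine h1.bdd_mul (c := 1) ?_ ?_
    · apply Continuous.aestronglyMeasurable
      fun_prop
    · refine Eventually.of_forall fun t => ?_
      rw [Complex.norm_exp_ofReal_mul_I]
  have e1 : ∀ ξ, ((gw a ξ * ‖FTr U ξ‖ ^ 2 : ℝ) : ℂ) = ∫ q, F ξ q := by
    intro ξ
    have h1 : (‖FTr U ξ‖ ^ 2 : ℂ) = FTr U ξ * (starRingEnd ℂ) (FTr U ξ) := by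
      rw [Complex.mul_conj, Complex.normSq_eq_norm_sq]; push_cast; rfl
    push_cast
    rw [h1]
    conv_lhs => rw [FTr_eq, ← integral_conj]
    rw [← integral_prod_mul, ← integral_const_mul]
    congr 1; ext q
    simp only [hF, map_mul, Complex.conj_ofReal, ← Complex.exp_conj, Complex.conj_I, inner_sub_left]
    have : cexp (((-2 * π * (inner ℝ q.1 ξ - inner ℝ q.2 ξ) : ℝ) : ℂ) * I)
      = cexp (((-2 * π * (inner ℝ q.1 ξ) : ℝ) : ℂ) * I)
        * cexp (((-2 * π * (inner ℝ q.2 ξ) : ℝ) : ℂ) * -I) := by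
      rw [← Complex.exp_add]; congr 1; push_cast; ring
    rw [this]; ring
  have e2 : ((∫ ξ, gw a ξ * ‖FTr U ξ‖ ^ 2 : ℝ) : ℂ)
      = ∫ q : E3 × E3, (gk a (q.1 - q.2) : ℂ) * ((U q.1 : ℂ) * (U q.2 : ℂ)) := by
    rw [← integral_complex_ofReal]
    simp_rw [e1]
    rw [integral_integral_swap hFint]
    congr 1; ext q
    rw [← gw_fourier a ha, ← integral_mul_const]
    congr 1; ext ξ
    simp only [hF]; ring
  have e3 : 0 ≤ ∫ ξ, gw a ξ * ‖FTr U ξ‖ ^ 2 :=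
    integral_nonneg fun ξ => mul_nonneg (Real.exp_nonneg _) (by positivity)
  rw [← Real.enorm_of_nonneg e3, ← my_enorm, e2]
  refine (enorm_integral_le_lintegral_enorm _).trans (le_of_eq ?_)
  congr 1; ext q
  rw [enorm_mul, enorm_mul, my_enorm, my_enorm, my_enorm,
    Real.enorm_of_nonneg (hgk _), mul_comm]

/-- one-dimensional Gaussian kernel -/
def kk (a t : ℝ) : ℝ := a * Real.exp (-π * a ^ 2 * t ^ 2)

lemma kk_meas (a : ℝ) : Measurable (fun t => ENNReal.ofReal (kk a t)) := by
  unfold kk; fun_prop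

lemma lint_gauss (c b : ℝ) (hc : 0 ≤ c) (hb : 0 < b) :
    ∫⁻ t : ℝ, ENNReal.ofReal (c * Real.exp (-b * t ^ 2)) = ENNReal.ofReal (c * √(π / b)) := by
  rw [← ofReal_integral_eq_lintegral_ofReal ((integrable_exp_neg_mul_sq hb).const_mul c)
    (Eventually.of_forall fun t => by positivity), integral_const_mul, integral_gaussian]

lemma kk_lint (a : ℝ) (ha : 0 < a) : ∫⁻ t : ℝ, ENNReal.ofReal (kk a t) = 1 := by
  have hpi := Real.pi_pos
  have := lint_gauss a (π * a ^ 2) ha.le (by positivity)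
  have e : a * √(π / (π * a ^ 2)) = 1 := by
    have : π / (π * a ^ 2) = (1 / a) ^ 2 := by field_simp
    rw [this, Real.sqrt_sq (by positivity)]; field_simp
  rw [e, ENNReal.ofReal_one] at this
  rw [← this]
  congr 1; ext t; rw [kk]; ring_nf

/-- trilinear Young inequality -/
lemma young (p : ℝ) (hp1 : 1 < p) (hp2 : p < 2) (V W E : ℝ → ℝ≥0∞) (hV : Measurable V)
    (hW : Measurable W) (hE : Measurable E) :
    ∫⁻ x, ∫⁻ y, V x * W y * E (x - y) ^ (2 * (1 - 1 / p)) ≤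
      (∫⁻ x, E x) ^ (2 * (1 - 1 / p)) *
        ((∫⁻ x, V x ^ p) ^ (1 / p) * (∫⁻ x, W x ^ p) ^ (1 / p)) := by
  have hp0 : 0 < p := by linarith
  set β := 1 - 1 / p with hβ
  set α := 2 / p - 1 with hα
  have hβ0 : 0 ≤ β := by
    rw [hβ, sub_nonneg, div_le_one hp0]; exact hp1.le
  have hα0 : 0 ≤ α := by
    rw [hα, sub_nonneg, le_div_iff₀ hp0]; linarith
  have hαβ : α + β = 1 / p := by rw [hα, hβ]; field_simp; ring
  have hsum : α + β + β = 1 := by rw [hαβ, hβ]; ring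
  have key : ∀ v w e : ℝ≥0∞, v * w * e ^ (2 * β)
      = (v ^ p * w ^ p) ^ α * (w ^ p * e) ^ β * (v ^ p * e) ^ β := by
    intro v w e
    have h1 : ∀ t : ℝ≥0∞, (t ^ p) ^ α * (t ^ p) ^ β = t := fun t => by
      rw [← ENNReal.rpow_add_of_nonneg _ _ hα0 hβ0, hαβ, ← ENNReal.rpow_mul,
        mul_one_div_cancel hp0.ne', ENNReal.rpow_one]
    rw [ENNReal.mul_rpow_of_nonneg _ _ hα0, ENNReal.mul_rpow_of_nonneg _ _ hβ0,
      ENNReal.mul_rpow_of_nonneg _ _ hβ0, two_mul, ENNReal.rpow_add_of_nonneg _ _ hβ0 hβ0]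
    conv_lhs => rw [← h1 v, ← h1 w]
    ring
  have hold := ENNReal.lintegral_prod_norm_pow_le (μ := (volume : Measure ℝ).prod volume)
    (Finset.univ : Finset (Fin 3))
    (f := ![fun q : ℝ × ℝ => V q.1 ^ p * W q.2 ^ p, fun q => W q.2 ^ p * E (q.1 - q.2),
      fun q => V q.1 ^ p * E (q.1 - q.2)]) (p := ![α, β, β])
    (by
      intro i _
      fin_cases i <;> simp <;> fun_prop)
    (by simp [Fin.sum_univ_three, hsum])
    (by intro i _; fin_cases i <;> simp [hα0, hβ0])
  simp only [Fin.prod_univ_three, Matrix.cons_val_zero, Matrix.cons_val_one, Matrix.cons_val] at hold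
  set A := ∫⁻ x, V x ^ p
  set B := ∫⁻ x, W x ^ p
  set K := ∫⁻ x, E x
  have i1 : ∫⁻ q : ℝ × ℝ, V q.1 ^ p * W q.2 ^ p ∂((volume : Measure ℝ).prod volume) = A * B :=
    lintegral_prod_mul (hV.pow_const p).aemeasurable (hW.pow_const p).aemeasurable
  have i2 : ∫⁻ q : ℝ × ℝ, W q.2 ^ p * E (q.1 - q.2) ∂((volume : Measure ℝ).prod volume)
      = B * K := by
    rw [lintegral_prod_symm _ (by fun_prop), ← lintegral_mul_const _ (by fun_prop)]
    congr 1; ext y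
    simp only
    rw [lintegral_const_mul _ (by fun_prop), lintegral_sub_right_eq_self E y]
  have i3 : ∫⁻ q : ℝ × ℝ, V q.1 ^ p * E (q.1 - q.2) ∂((volume : Measure ℝ).prod volume)
      = A * K := by
    rw [lintegral_prod _ (by fun_prop), ← lintegral_mul_const _ (by fun_prop)]
    congr 1; ext x
    simp only
    rw [lintegral_const_mul _ (by fun_prop), lintegral_sub_left_eq_self E x]
  rw [i1, i2, i3] at hold
  have lhs : ∫⁻ x, ∫⁻ y, V x * W y * E (x - y) ^ (2 * β)
      = ∫⁻ q : ℝ × ℝ, (V q.1 ^ p * W q.2 ^ p) ^ α * (W q.2 ^ p * E (q.1 - q.2)) ^ β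
        * (V q.1 ^ p * E (q.1 - q.2)) ^ β ∂((volume : Measure ℝ).prod volume) := by
    rw [lintegral_prod _ (by fun_prop)]
    simp_rw [key]
  rw [lhs]
  refine hold.trans (le_of_eq ?_)
  have h1 : ∀ t : ℝ≥0∞, t ^ α * t ^ β = t ^ (1 / p) := fun t => by
      rw [← ENNReal.rpow_add_of_nonneg _ _ hα0 hβ0, hαβ]
  rw [ENNReal.mul_rpow_of_nonneg _ _ hα0, ENNReal.mul_rpow_of_nonneg _ _ hβ0,
      ENNReal.mul_rpow_of_nonneg _ _ hβ0, two_mul, ENNReal.rpow_add_of_nonneg _ _ hβ0 hβ0,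
      ← h1 A, ← h1 B]
  ring

/-- the constant in the one-dimensional estimate -/
def cst (p : ℝ) : ℝ := (√(1 / (1 / (2 * (1 - 1 / p))))) ^ (2 * (1 - 1 / p))

lemma young_gauss (p : ℝ) (hp1 : 1 < p) (hp2 : p < 2) (r : ℝ) (hr : 0 < r) (V W : ℝ → ℝ≥0∞)
    (hV : Measurable V) (hW : Measurable W) :
    ∫⁻ x, ∫⁻ y, V x * W y * ENNReal.ofReal (kk r (x - y)) ≤
      ENNReal.ofReal (cst p * r ^ (2 / p - 1)) *
        ((∫⁻ x, V x ^ p) ^ (1 / p) * (∫⁻ x, W x ^ p) ^ (1 / p)) := by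
  have hp0 : 0 < p := by linarith
  have hpi := Real.pi_pos
  have hβ : 0 < 2 * (1 - 1 / p) := by
    have : 1 / p < 1 := by rw [div_lt_one hp0]; exact hp1
    linarith
  set γ := 2 * (1 - 1 / p) with hγ
  have h := young p hp1 hp2 V W
    (fun t => ENNReal.ofReal (r ^ (1 / γ) * Real.exp (-(π * (1 / γ) * r ^ 2) * t ^ 2))) hV hW
    (by fun_prop)
  rw [← hγ] at h
  have e1 : ∀ t : ℝ, ENNReal.ofReal (r ^ (1 / γ) * Real.exp (-(π * (1 / γ) * r ^ 2) * t ^ 2)) ^ γ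
      = ENNReal.ofReal (kk r t) := by
    intro t
    rw [ENNReal.ofReal_rpow_of_nonneg (by positivity) hβ.le,
      Real.mul_rpow (by positivity) (by positivity), ← Real.rpow_mul hr.le,
      one_div_mul_cancel hβ.ne', Real.rpow_one, ← Real.exp_mul, kk]
    congr 3
    field_simp
  simp_rw [e1] at h
  rw [lint_gauss _ _ (by positivity) (by positivity),
    ENNReal.ofReal_rpow_of_nonneg (by positivity) hβ.le] at h
  refine h.trans (le_of_eq ?_)
  congr 2
  have e2 : √(π / (π * (1 / γ) * r ^ 2)) = √(1 / (1 / γ)) * r⁻¹ := by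
    rw [← Real.sqrt_sq (inv_pos.mpr hr).le, ← Real.sqrt_mul (by positivity)]
    congr 1
    field_simp
  rw [e2, cst, ← hγ, Real.mul_rpow (by positivity) (by positivity), ← Real.rpow_mul hr.le,
      one_div_mul_cancel hβ.ne', Real.rpow_one, Real.mul_rpow (by positivity) (by positivity),
      Real.inv_rpow hr.le, ← Real.rpow_neg hr.le]
  have e3 : 2 / p - 1 = 1 + -γ := by rw [hγ]; ring
  rw [e3, Real.rpow_add hr, Real.rpow_one]
  ring

lemma cst_pos (p : ℝ) (hp1 : 1 < p) : 0 < cst p := by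
  have hp0 : 0 < p := by linarith
  have hβ : 0 < 2 * (1 - 1 / p) := by
    have : 1 / p < 1 := by rw [div_lt_one hp0]; exact hp1
    linarith
  unfold cst
  positivity

/-- coordinates -/
def co (t : (ℝ × ℝ) × ℝ) : E3 := pt t.1.1 t.1.2 t.2

lemma co_mp : MeasurePreserving co := by
  have h1 := (volume_preserving_finTwoArrow ℝ).symm
  have h2 := h1.prod (MeasurePreserving.id (volume : Measure ℝ))
  have h3 := (Measure.measurePreserving_swap (μ := (volume : Measure (Fin 2 → ℝ)))
    (ν := (volume : Measure ℝ))).comp h2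
  have h4 := (volume_preserving_piFinSuccAbove (fun _ : Fin 3 => ℝ) (Fin.last 2)).symm
  have h5 := (PiLp.volume_preserving_toLp (Fin 3)).comp (h4.comp h3)
  have e : co = WithLp.toLp 2 ∘ (MeasurableEquiv.piFinSuccAbove (fun _ : Fin 3 => ℝ)
      (Fin.last 2)).symm ∘ Prod.swap ∘ Prod.map (MeasurableEquiv.finTwoArrow (α := ℝ)).symm id := by
    ext t i
    fin_cases i <;> simp [co, pt, MeasurableEquiv.piFinSuccAbove, MeasurableEquiv.finTwoArrow] <;> rfl
  rw [e]
  exact h5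

lemma co_0 (t) : co t 0 = t.1.1 := rfl
lemma co_1 (t) : co t 1 = t.1.2 := rfl
lemma co_2 (t) : co t 2 = t.2 := rfl

lemma gk_co (R r : ℝ) (hR : 0 < R) (xh yh : ℝ × ℝ) (x3 y3 : ℝ) :
    ENNReal.ofReal (gk ![R, R, r] (co (xh, x3) - co (yh, y3))) =
      ENNReal.ofReal (kk R (xh.1 - yh.1)) * ENNReal.ofReal (kk R (xh.2 - yh.2))
        * ENNReal.ofReal (kk r (x3 - y3)) := by
  have h : ∀ t, 0 ≤ kk R t := fun t => by unfold kk; positivity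
  rw [← ENNReal.ofReal_mul (h _), ← ENNReal.ofReal_mul (mul_nonneg (h _) (h _))]
  congr 1
  simp only [gk, Fin.prod_univ_three, PiLp.sub_apply, co_0, co_1, co_2, kk]
  rfl

lemma G_lint (R : ℝ) (hR : 0 < R) (xh : ℝ × ℝ) :
    ∫⁻ yh : ℝ × ℝ, ENNReal.ofReal (kk R (xh.1 - yh.1)) * ENNReal.ofReal (kk R (xh.2 - yh.2)) = 1 := by
  have hm := kk_meas R
  rw [Measure.volume_eq_prod,
    lintegral_prod_mul (f := fun t => ENNReal.ofReal (kk R (xh.1 - t)))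
      (g := fun t => ENNReal.ofReal (kk R (xh.2 - t)))
      (hm.comp (measurable_const.sub measurable_id)).aemeasurable
      (hm.comp (measurable_const.sub measurable_id)).aemeasurable,
    lintegral_sub_left_eq_self (fun t => ENNReal.ofReal (kk R t)),
    lintegral_sub_left_eq_self (fun t => ENNReal.ofReal (kk R t)), kk_lint R hR, one_mul]

lemma G_lint' (R : ℝ) (hR : 0 < R) (yh : ℝ × ℝ) :
    ∫⁻ xh : ℝ × ℝ, ENNReal.ofReal (kk R (xh.1 - yh.1)) * ENNReal.ofReal (kk R (xh.2 - yh.2)) = 1 := by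
  rw [← G_lint R hR yh]
  congr 1; ext xh
  congr 2 <;> unfold kk <;> congr 3 <;> ring

lemma horiz (c : ℝ≥0∞) (G : ℝ × ℝ → ℝ × ℝ → ℝ≥0∞) (hGm : Measurable (Function.uncurry G))
    (hG1 : ∀ xh, ∫⁻ yh, G xh yh = 1) (hG2 : ∀ yh, ∫⁻ xh, G xh yh = 1) (N : ℝ × ℝ → ℝ≥0∞)
    (hNm : Measurable N) :
    ∫⁻ xh, ∫⁻ yh, (c * (N xh ^ 2 * G xh yh) + c * (N yh ^ 2 * G xh yh)) =
      c * (∫⁻ xh, N xh ^ 2) + c * (∫⁻ xh, N xh ^ 2) := by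
  have hm : ∀ xh, Measurable (G xh) := fun xh => hGm.comp measurable_prodMk_left
  have hm' : ∀ yh, Measurable (fun xh => G xh yh) := fun yh => hGm.comp measurable_prodMk_right
  have hm2 : Measurable (Function.uncurry fun xh yh => c * (N yh ^ 2 * G xh yh)) :=
    (((hNm.comp measurable_snd).pow_const 2).mul hGm).const_mul c
  have e1 : ∀ xh, ∫⁻ yh, (c * (N xh ^ 2 * G xh yh) + c * (N yh ^ 2 * G xh yh))
      = c * N xh ^ 2 + ∫⁻ yh, c * (N yh ^ 2 * G xh yh) := by
    intro xh
    rw [lintegral_add_left (((hm xh).const_mul _).const_mul _),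
      lintegral_const_mul _ ((hm xh).const_mul _), lintegral_const_mul _ (hm xh), hG1, mul_one]
  simp_rw [e1]
  rw [lintegral_add_left ((hNm.pow_const 2).const_mul c),
    lintegral_lintegral_swap hm2.aemeasurable, lintegral_const_mul _ (hNm.pow_const 2)]
  congr 1
  rw [← lintegral_const_mul _ (hNm.pow_const 2)]
  refine lintegral_congr fun yh => ?_
  rw [lintegral_const_mul _ ((hm' yh).const_mul _), lintegral_const_mul _ (hm' yh), hG2, mul_one]

set_option maxHeartbeats 400000 in
lemma kernel_est (p : ℝ) (hp1 : 1 < p) (hp2 : p < 2) (R r : ℝ) (hR : 0 < R) (hr : 0 < r)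
    (U : E3 → ℝ) (hU : Measurable U) :
    ∫⁻ q : E3 × E3, ‖U q.1‖ₑ * ‖U q.2‖ₑ * ENNReal.ofReal (gk ![R, R, r] (q.1 - q.2)) ≤
      ENNReal.ofReal (cst p * r ^ (2 / p - 1)) * (2 *
        ∫⁻ xh : ℝ × ℝ, (∫⁻ x3, ‖U (co (xh, x3))‖ₑ ^ p) ^ (2 / p)) := by
  have hp0 : 0 < p := by linarith
  have hco : Measurable co := co_mp.measurable
  have hgk : Measurable (fun z => gk ![R, R, r] z) := by unfold gk; fun_prop
  have hΦ : Measurable (fun q : E3 × E3 =>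
      ‖U q.1‖ₑ * ‖U q.2‖ₑ * ENNReal.ofReal (gk ![R, R, r] (q.1 - q.2))) := by fun_prop
  set G : ℝ × ℝ → ℝ × ℝ → ℝ≥0∞ := fun xh yh =>
    ENNReal.ofReal (kk R (xh.1 - yh.1)) * ENNReal.ofReal (kk R (xh.2 - yh.2)) with hG
  set V : ℝ × ℝ → ℝ → ℝ≥0∞ := fun xh x3 => ‖U (co (xh, x3))‖ₑ with hV
  have hk : ∀ a, Measurable (kk a) := fun a => by unfold kk; fun_prop
  have hkR := hk R
  have hkr := hk r
  have hVm : Measurable (Function.uncurry V) := by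
    simp only [hV, Function.uncurry_def]; fun_prop
  have hVm' : ∀ xh, Measurable (V xh) := fun xh => hVm.comp measurable_prodMk_left
  have hGm : Measurable (Function.uncurry G) := by
    simp only [hG, Function.uncurry_def]; fun_prop
  set N : ℝ × ℝ → ℝ≥0∞ := fun xh => (∫⁻ x3, V xh x3 ^ p) ^ (1 / p) with hN
  have hNm : Measurable N := by
    have : Measurable (fun xh => ∫⁻ x3, V xh x3 ^ p) :=
      Measurable.lintegral_prod_right (hVm.pow_const p)
    exact this.pow_const _
  have hN2 : ∀ xh, N xh ^ 2 = (∫⁻ x3, V xh x3 ^ p) ^ (2 / p) := fun xh => by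
    rw [hN, ← ENNReal.rpow_natCast, ← ENNReal.rpow_mul]; congr 1; push_cast; ring
  have step1 : ∫⁻ q : E3 × E3, ‖U q.1‖ₑ * ‖U q.2‖ₑ * ENNReal.ofReal (gk ![R, R, r] (q.1 - q.2))
      = ∫⁻ xh, ∫⁻ yh, G xh yh *
          ∫⁻ x3, ∫⁻ y3, V xh x3 * V yh y3 * ENNReal.ofReal (kk r (x3 - y3)) := by
    have hmp := co_mp.prod co_mp
    have hΦ' := hΦ.comp hmp.measurable
    have hΦ2 := hΦ'.lintegral_prod_right' (ν := (volume : Measure (ℝ × ℝ)).prod (volume : Measure ℝ))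
    simp only [Function.comp_apply] at hΦ2
    rw [Measure.volume_eq_prod, ← hmp.lintegral_comp hΦ, lintegral_prod _ (by fun_prop),
      Measure.volume_eq_prod (ℝ × ℝ) ℝ, lintegral_prod _ hΦ2.aemeasurable]
    refine lintegral_congr fun xh => ?_
    have e : ∀ x3, ∫⁻ y : (ℝ × ℝ) × ℝ, (‖U (Prod.map co co ((xh, x3), y)).1‖ₑ *
        ‖U (Prod.map co co ((xh, x3), y)).2‖ₑ * ENNReal.ofReal (gk ![R, R, r]
          ((Prod.map co co ((xh, x3), y)).1 - (Prod.map co co ((xh, x3), y)).2)))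
          ∂((volume : Measure (ℝ × ℝ)).prod volume)
        = ∫⁻ yh, ∫⁻ y3, G xh yh * (V xh x3 * V yh y3 * ENNReal.ofReal (kk r (x3 - y3))) := by
      intro x3
      rw [lintegral_prod _ (by fun_prop)]
      refine lintegral_congr fun yh => lintegral_congr fun y3 => ?_
      simp only [Prod.map, gk_co R r hR, hG, hV]
      ring
    simp_rw [e]
    have hm4 : Measurable (fun z : (ℝ × (ℝ × ℝ)) × ℝ =>
        G xh z.1.2 * (V xh z.1.1 * V z.1.2 z.2 * ENNReal.ofReal (kk r (z.1.1 - z.2)))) := by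
      simp only [hG, hV]; fun_prop
    rw [lintegral_lintegral_swap (Measurable.aemeasurable (by
      simp only [Function.uncurry_def]
      exact hm4.lintegral_prod_right'))]
    refine lintegral_congr fun yh => ?_
    have hm2 : Measurable (fun z : ℝ × ℝ =>
        V xh z.1 * V yh z.2 * ENNReal.ofReal (kk r (z.1 - z.2))) := by
      simp only [hV]; fun_prop
    rw [← lintegral_const_mul _ hm2.lintegral_prod_right']
    refine lintegral_congr fun x3 => ?_
    have hm3 : Measurable (fun y3 => V xh x3 * V yh y3 * ENNReal.ofReal (kk r (x3 - y3))) := by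
      simp only [hV]; fun_prop
    exact lintegral_const_mul _ hm3
  rw [step1]
  set c := ENNReal.ofReal (cst p * r ^ (2 / p - 1)) with hc
  calc ∫⁻ xh, ∫⁻ yh, G xh yh *
          ∫⁻ x3, ∫⁻ y3, V xh x3 * V yh y3 * ENNReal.ofReal (kk r (x3 - y3))
      ≤ ∫⁻ xh, ∫⁻ yh, (c * (N xh ^ 2 * G xh yh) + c * (N yh ^ 2 * G xh yh)) := by
        refine lintegral_mono fun xh => lintegral_mono fun yh => ?_
        have h1 := young_gauss p hp1 hp2 r hr (V xh) (V yh) (hVm' xh) (hVm' yh)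
        have h2 : N xh * N yh ≤ N xh ^ 2 + N yh ^ 2 := by
          rcases le_total (N xh) (N yh) with h | h
          · calc N xh * N yh ≤ N yh * N yh := by gcongr
              _ = N yh ^ 2 := (sq _).symm
              _ ≤ _ := le_add_self
          · calc N xh * N yh ≤ N xh * N xh := by gcongr
              _ = N xh ^ 2 := (sq _).symm
              _ ≤ _ := le_self_add
        calc _ ≤ G xh yh * (c * (N xh * N yh)) := by gcongr
          _ ≤ G xh yh * (c * (N xh ^ 2 + N yh ^ 2)) := by gcongr
          _ = _ := by ring
    _ = c * (∫⁻ xh, N xh ^ 2) + c * (∫⁻ xh, N xh ^ 2) :=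
        horiz c G hGm (G_lint R hR) (G_lint' R hR) N hNm
    _ = _ := by simp_rw [hN2]; ring

lemma norm_eq (p : ℝ) (hp1 : 1 < p) (hp2 : p < 2) (U : E3 → ℝ) (hU : Measurable U)
    (h1 : Integrable U) (h2 : MemLp U 2 volume) (h3 : MemL2hLpv p U) :
    ∫⁻ xh : ℝ × ℝ, (∫⁻ x3, ‖U (co (xh, x3))‖ₑ ^ p) ^ (2 / p)
      = ENNReal.ofReal (L2hLpvNorm p U ^ 2) := by
  have hp0 : 0 < p := by linarith
  have hco : Measurable co := co_mp.measurable
  have hsq : Integrable (fun x => U x ^ 2) := h2.integrable_sq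
  have k1 : Integrable (fun t => U (co t)) ((volume : Measure (ℝ × ℝ)).prod volume) :=
    co_mp.integrable_comp_of_integrable h1
  have k2 : Integrable (fun t => U (co t) ^ 2) ((volume : Measure (ℝ × ℝ)).prod volume) :=
    co_mp.integrable_comp_of_integrable hsq
  have hfib : ∀ᵐ xh : ℝ × ℝ, Integrable (fun x3 => |U (co (xh, x3))| ^ p) := by
    filter_upwards [k1.prod_right_ae, k2.prod_right_ae] with xh i1 i2
    refine Integrable.mono' (i1.norm.add i2) ?_ (Eventually.of_forall fun x3 => ?_)
    · apply Measurable.aestronglyMeasurable; fun_prop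
    · simp only [Pi.add_apply, Real.norm_eq_abs]
      rw [abs_of_nonneg (by positivity), ← sq_abs]
      set u := |U (co (xh, x3))|
      have hu : 0 ≤ u := abs_nonneg _
      rcases le_total u 1 with h | h
      · have : u ^ p ≤ u ^ (1:ℝ) := Real.rpow_le_rpow_of_exponent_ge' hu h (by norm_num) hp1.le
        rw [Real.rpow_one] at this
        nlinarith [sq_nonneg u]
      · have : u ^ p ≤ u ^ (2:ℝ) := Real.rpow_le_rpow_of_exponent_le h hp2.le
        rw [Real.rpow_two] at this
        linarith
  have hnn : 0 ≤ ∫ xh : ℝ × ℝ, (∫ x3 : ℝ, |U (pt xh.1 xh.2 x3)| ^ p) ^ (2/p) :=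
    integral_nonneg fun xh => Real.rpow_nonneg (integral_nonneg fun _ => by positivity) _
  have e : L2hLpvNorm p U ^ 2 = ∫ xh : ℝ × ℝ, (∫ x3 : ℝ, |U (pt xh.1 xh.2 x3)| ^ p) ^ (2/p) := by
    rw [L2hLpvNorm, ← Real.sqrt_eq_rpow, Real.sq_sqrt hnn]
  rw [e, ofReal_integral_eq_lintegral_ofReal h3 (Eventually.of_forall fun xh =>
    Real.rpow_nonneg (integral_nonneg fun _ => by positivity) _)]
  refine lintegral_congr_ae ?_
  filter_upwards [hfib] with xh hx
  rw [← ENNReal.ofReal_rpow_of_nonneg (integral_nonneg fun _ => by positivity) (by positivity)]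
  congr 1
  change _ = ENNReal.ofReal (∫ x3, |U (co (xh, x3))| ^ p)
  rw [ofReal_integral_eq_lintegral_ofReal hx (Eventually.of_forall fun _ => by positivity)]
  refine lintegral_congr fun x3 => ?_
  rw [← ENNReal.ofReal_rpow_of_nonneg (abs_nonneg _) hp0.le, ← Real.norm_eq_abs, ofReal_norm]

/-- Let `s ≥ 0`, `p ∈ (1,2)`, `p' = p/(2−p)`. There is `C > 0`
(depending only on `s, p`) such that for every `R ≥ 1`, `0 < r ≤ 1` and every
`U₀ ∈ L²(ℝ³) ∩ L²_hL^p_v(ℝ³)`: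
`∫_{|ξ₃|<r, |ξ_h|<R} (1+|ξ|²)^s |Û₀(ξ)|² dξ ≤ C R^{2s} r^{1/p'} ‖U₀‖²_{L²_hL^p_v}`. -/
theorem low_vertical_frequency_estimate (s p : ℝ) (hs : 0 ≤ s) (hp1 : 1 < p) (hp2 : p < 2) :
    ∃ C : ℝ, 0 < C ∧ ∀ R r : ℝ, 1 ≤ R → 0 < r → r ≤ 1 →
      ∀ U0 : E3 → ℝ, Measurable U0 → MemLp U0 2 volume → MemL2hLpv p U0 →
        (∫ ξ in {ξ : E3 | |ξ 2| < r ∧ xih ξ < R},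
            (1 + ‖ξ‖ ^ 2) ^ s * ‖FTr U0 ξ‖ ^ 2) ≤
          C * R ^ (2 * s) * r ^ (1 / (p / (2 - p))) * L2hLpvNorm p U0 ^ 2 := by
  have hc := cst_pos p hp1
  have hp0 : 0 < p := by linarith
  have hpi := Real.pi_pos
  refine ⟨3 ^ s * Real.exp (2 * π) * (2 * cst p), by positivity, ?_⟩
  intro R r hR hr hr1 U hU hU2 hUp
  have hR0 : 0 < R := by linarith
  by_cases hint : Integrable U
  swap
  · have h0 : ∀ ξ, FTr U ξ = 0 := by
      intro ξ
      rw [FTr_eq]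
      apply integral_undef
      intro hcon
      apply hint
      have h := hcon.norm
      simp only [norm_mul, Complex.norm_exp_ofReal_mul_I, one_mul, Complex.norm_real] at h
      exact (integrable_norm_iff hU.aestronglyMeasurable).1 h
    simp only [h0, norm_zero]
    simp only [ne_eq, OfNat.ofNat_ne_zero, not_false_eq_true, zero_pow, mul_zero, integral_zero]
    positivity
  have ha : ∀ i, 0 < (![R, R, r] : Fin 3 → ℝ) i := by
    intro i; fin_cases i <;> simp [hR0, hr]
  have hexp : 1 / (p / (2 - p)) = 2 / p - 1 := by field_simp
  rw [hexp]
  have hw : ∫ ξ, gw ![R, R, r] ξ * ‖FTr U ξ‖ ^ 2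
      ≤ cst p * r ^ (2 / p - 1) * (2 * L2hLpvNorm p U ^ 2) := by
    have h := (weighted_le _ ha U hint).trans (kernel_est p hp1 hp2 R r hR0 hr U hU)
    rw [norm_eq p hp1 hp2 U hU hint hU2 hUp] at h
    have e2 : 2 * ENNReal.ofReal (L2hLpvNorm p U ^ 2)
        = ENNReal.ofReal (2 * L2hLpvNorm p U ^ 2) := by
      rw [ENNReal.ofReal_mul (by norm_num)]; simp
    rw [e2, ← ENNReal.ofReal_mul (by positivity)] at h
    exact (ENNReal.ofReal_le_ofReal_iff (by positivity)).1 h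
  have hgi := (gw_FTr_integrable _ ha U hint).const_mul ((3 * R ^ 2) ^ s * Real.exp (2 * π))
  have hSm : MeasurableSet {ξ : E3 | |ξ 2| < r ∧ xih ξ < R} := by
    have h2 : Measurable (fun ξ : E3 => |ξ 2|) := by fun_prop
    have h3 : Measurable xih := by unfold xih; fun_prop
    exact (measurableSet_lt h2 measurable_const).inter (measurableSet_lt h3 measurable_const)
  calc (∫ ξ in {ξ : E3 | |ξ 2| < r ∧ xih ξ < R}, (1 + ‖ξ‖ ^ 2) ^ s * ‖FTr U ξ‖ ^ 2)
      ≤ ∫ ξ in {ξ : E3 | |ξ 2| < r ∧ xih ξ < R},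
          (3 * R ^ 2) ^ s * Real.exp (2 * π) * (gw ![R, R, r] ξ * ‖FTr U ξ‖ ^ 2) := by
        refine integral_mono_of_nonneg (Eventually.of_forall fun ξ => by positivity)
          hgi.integrableOn ?_
        refine (ae_restrict_mem hSm).mono fun ξ hξ => ?_
        obtain ⟨h2, hh⟩ := hξ
        have hh' : ξ 0 ^ 2 + ξ 1 ^ 2 ≤ R ^ 2 := by
          have := (Real.sqrt_lt' hR0).1 hh
          exact this.le
        have h2' : ξ 2 ^ 2 ≤ r ^ 2 := by
          rw [← sq_abs]; gcongr
        have hn : 1 + ‖ξ‖ ^ 2 ≤ 3 * R ^ 2 := by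
          rw [EuclideanSpace.norm_sq_eq, Fin.sum_univ_three]
          simp only [Real.norm_eq_abs, sq_abs]
          nlinarith
        have hg : 1 ≤ Real.exp (2 * π) * gw ![R, R, r] ξ := by
          rw [gw, ← Real.exp_add]
          apply Real.one_le_exp
          simp only [Fin.sum_univ_three, Matrix.cons_val_zero, Matrix.cons_val_one, Matrix.cons_val]
          have a1 : π / R ^ 2 * ξ 0 ^ 2 + π / R ^ 2 * ξ 1 ^ 2 ≤ π := by
            rw [← mul_add, div_mul_eq_mul_div, div_le_iff₀ (by positivity)]
            gcongr
          have a2 : π / r ^ 2 * ξ 2 ^ 2 ≤ π := by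
            rw [div_mul_eq_mul_div, div_le_iff₀ (by positivity)]
            gcongr
          linarith
        calc (1 + ‖ξ‖ ^ 2) ^ s * ‖FTr U ξ‖ ^ 2
            ≤ (3 * R ^ 2) ^ s * (1 * ‖FTr U ξ‖ ^ 2) := by rw [one_mul]; gcongr
          _ ≤ (3 * R ^ 2) ^ s * ((Real.exp (2 * π) * gw ![R, R, r] ξ) * ‖FTr U ξ‖ ^ 2) := by
              gcongr
          _ = _ := by ring
    _ ≤ ∫ ξ, (3 * R ^ 2) ^ s * Real.exp (2 * π) * (gw ![R, R, r] ξ * ‖FTr U ξ‖ ^ 2) :=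
        setIntegral_le_integral hgi (Eventually.of_forall fun ξ => by
          have : 0 ≤ gw ![R, R, r] ξ := Real.exp_nonneg _
          simp only [Pi.zero_apply]
          positivity)
    _ = (3 * R ^ 2) ^ s * Real.exp (2 * π) * ∫ ξ, gw ![R, R, r] ξ * ‖FTr U ξ‖ ^ 2 :=
        integral_const_mul _ _
    _ ≤ (3 * R ^ 2) ^ s * Real.exp (2 * π) *
          (cst p * r ^ (2 / p - 1) * (2 * L2hLpvNorm p U ^ 2)) := by gcongr
    _ = _ := by
        rw [Real.mul_rpow (by norm_num) (by positivity), ← Real.rpow_natCast R 2,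
          ← Real.rpow_mul hR0.le]
        push_cast
        ring
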